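/- For every q ≤ 1966: the word w contains no factor v having kernel period q such that 34·|v| ≥ 35·q (equivalently, |v|/q ≥ 35/34). (Remark R2.) -/

import Mathlib

/-- The four-letter alphabet `A₄ = {1,2,3,4}`; the value `k : Fin 4` represents letter `k+1`. -/
abbrev A4 := Fin 4

/-- The morphism `f` on letters: `f(1)=121, f(2)=123, f(3)=141, f(4)=142`
(letters `1,2,3,4` encoded as `0,1,2,3`). -/
def fm : A4 → List A4
  | 0 => [0, 1, 0]
  | 1 => [0, 1, 2]
  | 2 => [0, 3, 0]
  | 3 => [0, 3, 1]

/-- The morphism `f` extended to words by concatenation. -/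
def fw (u : List A4) : List A4 := u.flatMap fm

/-- The fixed point `w` of `f` starting with the letter `1`: since `|f^k(1)| = 3^k` and each
`f^k(1)` is a prefix of `f^(k+1)(1)`, the `n`-th letter of `w` is the `n`-th letter of
`f^(n+1)(1)`. -/
def w (n : ℕ) : A4 := ((fw^[n + 1]) [0]).getD n 0

/-- The finite word `t` occurs at position `i` in the infinite word `x`. -/
def OccursAt {α : Type*} (t : List α) (x : ℕ → α) (i : ℕ) : Prop :=
  t = (List.range t.length).map fun k => x (i + k)

/-- The finite word `v` is a factor of the infinite word `x`. -/
def FactorOf {α : Type*} (v : List α) (x : ℕ → α) : Prop :=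
  ∃ i, OccursAt v x i

/-- The finite word `v` has period `q ≥ 1`: `v(j) = v(j+q)` whenever `0 ≤ j < |v| - q`. -/
def HasPeriod {α : Type*} (v : List α) (q : ℕ) : Prop :=
  1 ≤ q ∧ ∀ j, j + q < v.length → v[j]? = v[j + q]?

/-- A word lies in `ker ψ` if each letter of `A₄` occurs in it a number of times
divisible by `4`. -/
def InKerPsi (u : List A4) : Prop := ∀ a : A4, 4 ∣ u.count a

/-- `q` is a kernel period of `v`: `1 ≤ q ≤ |v|`, `v` has period `q`, and the prefix of `v`
of length `q` lies in `ker ψ`. -/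
def KernelPeriod (v : List A4) (q : ℕ) : Prop :=
  q ≤ v.length ∧ HasPeriod v q ∧ InKerPsi (v.take q)


/-- Enumerated copy of the alphabet, convenient for kernel evaluation. -/
inductive Q4 where
  | a | b | c | d

/-- Translation to the alphabet `A4`. -/
def Q4.toA : Q4 → A4
  | .a => 0 | .b => 1 | .c => 2 | .d => 3

/-- Weight of a letter in the packed Parikh vector (one hex digit per letter). -/
def Q4.wt : Q4 → ℕ
  | .a => 1 | .b => 16 | .c => 256 | .d => 4096

/-- Second letter of the image under the morphism. -/
def Q4.snd : Q4 → Q4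
  | .a => .b | .b => .b | .c => .d | .d => .d

/-- Third letter of the image under the morphism. -/
def Q4.trd : Q4 → Q4
  | .a => .a | .b => .c | .c => .a | .d => .b

/-- Evaluate a number before passing it on. -/
def force (n : ℕ) (K : ℕ → Bool) : Bool :=
  match n with
  | 0 => K 0
  | m + 1 => K (m + 1)

/-- Continuation passing computation of the packed list of prefix Parikh vectors (mod 4). -/
def enc : ℕ → Q4 → ℕ → (ℕ → ℕ → Bool) → Bool
  | 0, x, s, K => force ((s + x.wt) &&& 13107) fun s' => K s s'
  | k + 1, x, s, K =>
    enc k .a s fun c1 s1 => enc k x.snd s1 fun c2 s2 => enc k x.trd s2 fun c3 s3 =>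
      force (c1 + 2 ^ (16 * 3 ^ k) * (c2 + 2 ^ (16 * 3 ^ k) * c3)) fun c => K c s3

/-- Bit `p` of `spread f D m` can only be set if one of the bits `p, …, p+m-1` of `D` is. -/
def spread : ℕ → ℕ → ℕ → ℕ
  | 0, D, _ => D
  | f + 1, D, m => bif Nat.ble m 1 then D else spread f (D ||| (D >>> (m / 2))) (m - m / 2)

/-- The test for one period. -/
def test (A M q : ℕ) : Bool :=
  Nat.beq (spread 10 (A ^^^ (A >>> (16 * q))) (16 * ((q + 33) / 34 + 1)) &&& M) M

/-- The test for all periods `4, 8, …, 4 n`. -/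
def tests (A M : ℕ) : ℕ → Bool
  | 0 => true
  | n + 1 => test A M (4 * (n + 1)) && tests A M n

/-- Test of the word `f^7(xy)`. -/
def testPair (x y : Q4) : Bool :=
  enc 7 x 0 fun c1 s1 => enc 7 y s1 fun c2 _ =>
    force (c1 + 2 ^ (16 * 3 ^ 7) * c2) fun A =>
    force ((2 ^ (16 * 3 ^ 7) - 1) / 65535) fun M => tests A M 491

/-- The test succeeds for all two-letter factors of `w`. -/
theorem tp_aa : testPair .a .a = true := by decide +kernel
theorem tp_ab : testPair .a .b = true := by decide +kernel
theorem tp_ad : testPair .a .d = true := by decide +kernel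
theorem tp_ba : testPair .b .a = true := by decide +kernel
theorem tp_bc : testPair .b .c = true := by decide +kernel
theorem tp_ca : testPair .c .a = true := by decide +kernel
theorem tp_da : testPair .d .a = true := by decide +kernel
theorem tp_db : testPair .d .b = true := by decide +kernel

/-- Weight of a letter of `A4`. -/
def wtA (x : A4) : ℕ := 16 ^ (x : ℕ)

/-- One step of the packed Parikh vector. -/
def stp (s : ℕ) (x : A4) : ℕ := (s + wtA x) &&& 13107

/-- Packed list of the states along a word. -/
def E (s : ℕ) : List A4 → ℕ
  | [] => 0
  | x :: l => s + 2 ^ 16 * E (stp s x) l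

theorem E_append (l₁ l₂ : List A4) (s : ℕ) :
    E s (l₁ ++ l₂) = E s l₁ + 2 ^ (16 * l₁.length) * E (l₁.foldl stp s) l₂ := by
  induction l₁ generalizing s with
  | nil => simp [E]
  | cons x l ih =>
    simp only [List.cons_append, E, List.foldl_cons, List.length_cons, ih]
    ring

theorem fw_append (u v : List A4) : fw (u ++ v) = fw u ++ fw v := by simp [fw]

theorem fw_iter_append (k : ℕ) (u v : List A4) :
    fw^[k] (u ++ v) = fw^[k] u ++ fw^[k] v := by
  induction k generalizing u v with
  | zero => rfl
  | succ k ih => simp only [Function.iterate_succ, Function.comp, fw_append, ih]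

theorem fm_length (x : A4) : (fm x).length = 3 := by fin_cases x <;> rfl

theorem fw_length (u : List A4) : (fw u).length = 3 * u.length := by
  induction u with
  | nil => rfl
  | cons x l ih =>
    have : fw (x :: l) = fm x ++ fw l := rfl
    rw [this, List.length_append, ih, fm_length, List.length_cons]; ring

theorem fw_iter_length (k : ℕ) (u : List A4) : (fw^[k] u).length = 3 ^ k * u.length := by
  induction k generalizing u with
  | zero => simp
  | succ k ih => rw [Function.iterate_succ_apply, ih, fw_length]; ring

theorem fm_toA (x : Q4) : fw [x.toA] = [Q4.a.toA] ++ ([x.snd.toA] ++ [x.trd.toA]) := by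
  cases x <;> rfl

theorem force_eq (n : ℕ) (K : ℕ → Bool) : force n K = K n := by
  cases n <;> rfl

theorem wt_toA (x : Q4) : wtA x.toA = x.wt := by cases x <;> rfl

theorem enc_eq (k : ℕ) (x : Q4) (s : ℕ) (K : ℕ → ℕ → Bool) :
    enc k x s K = K (E s (fw^[k] [x.toA])) ((fw^[k] [x.toA]).foldl stp s) := by
  induction k generalizing x s K with
  | zero => simp [enc, force_eq, E, stp, wt_toA]
  | succ k ih =>
    simp only [enc, ih, force_eq]
    rw [Function.iterate_succ_apply, fm_toA, fw_iter_append, fw_iter_append]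
    simp only [E_append, List.foldl_append, fw_iter_length, List.length_singleton, mul_one]

theorem spread_false (f D m p : ℕ) (hm : 1 ≤ m)
    (h : ∀ t, t < m → D.testBit (p + t) = false) : (spread f D m).testBit p = false := by
  induction f generalizing D m with
  | zero => simpa [spread] using h 0 (by omega)
  | succ f ih =>
    rw [spread]
    by_cases hm1 : m ≤ 1
    · have : Nat.ble m 1 = true := Nat.ble_eq ▸ hm1
      rw [this]
      simpa using h 0 (by omega)
    · have : Nat.ble m 1 = false := by
        rw [← Bool.not_eq_true, Nat.ble_eq]; exact hm1
      rw [this]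
      apply ih _ _ (by omega)
      intro t ht
      rw [Nat.testBit_or, Nat.testBit_shiftRight, h t (by omega),
        show m / 2 + (p + t) = p + (m / 2 + t) by ring, h _ (by omega)]
      rfl

theorem stp_lt (s : ℕ) (x : A4) : stp s x < 2 ^ 16 :=
  lt_of_le_of_lt Nat.and_le_right (by norm_num)

theorem foldl_stp_lt (u : List A4) (s : ℕ) (hs : s < 2 ^ 16) : u.foldl stp s < 2 ^ 16 := by
  induction u generalizing s with
  | nil => exact hs
  | cons x l ih => exact ih _ (stp_lt s x)

theorem E_bit (l : List A4) (s j t : ℕ) (hs : s < 2 ^ 16) (hj : j < l.length) (ht : t < 16) :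
    (E s l).testBit (16 * j + t) = ((l.take j).foldl stp s).testBit t := by
  induction l generalizing s j with
  | nil => simp at hj
  | cons x l ih =>
    rw [E, add_comm s]
    cases j with
    | zero => rw [Nat.testBit_two_pow_mul_add _ hs]; simp [ht]
    | succ j =>
      rw [Nat.testBit_two_pow_mul_add _ hs, if_neg (by omega),
        show 16 * (j + 1) + t - 16 = 16 * j + t by omega, ih _ _ (stp_lt s x) (by simpa using hj)]
      rfl

/-- Packed vector of counts modulo 4. -/
def pk (a b c d : ℕ) : ℕ := a % 4 + 16 * (b % 4) + 256 * (c % 4) + 4096 * (d % 4)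

theorem stp_fin : ∀ a b c d : Fin 4,
    ((a : ℕ) + 16 * b + 256 * c + 4096 * d + 1) &&& 13107
      = ((a : ℕ) + 1) % 4 + 16 * b + 256 * c + 4096 * d ∧
    ((a : ℕ) + 16 * b + 256 * c + 4096 * d + 16) &&& 13107
      = a + 16 * (((b : ℕ) + 1) % 4) + 256 * c + 4096 * d ∧
    ((a : ℕ) + 16 * b + 256 * c + 4096 * d + 256) &&& 13107
      = a + 16 * b + 256 * (((c : ℕ) + 1) % 4) + 4096 * d ∧
    ((a : ℕ) + 16 * b + 256 * c + 4096 * d + 4096) &&& 13107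
      = a + 16 * b + 256 * c + 4096 * (((d : ℕ) + 1) % 4) := by decide +kernel

theorem foldl_pk (u : List A4) (a b c d : ℕ) :
    u.foldl stp (pk a b c d) =
      pk (a + u.count 0) (b + u.count 1) (c + u.count 2) (d + u.count 3) := by
  induction u generalizing a b c d with
  | nil => simp
  | cons x l ih =>
    have hl : ∀ n : ℕ, n % 4 < 4 := fun n => Nat.mod_lt _ (by norm_num)
    obtain ⟨h0, h1, h2, h3⟩ := stp_fin ⟨_, hl a⟩ ⟨_, hl b⟩ ⟨_, hl c⟩ ⟨_, hl d⟩
    simp only [Nat.mod_add_mod] at h0 h1 h2 h3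
    rw [List.foldl_cons]
    fin_cases x
    · have : stp (pk a b c d) 0 = pk (a + 1) b c d := h0
      simp only [Fin.zero_eta, this, ih]
      simp [add_assoc, add_comm 1]
    · have : stp (pk a b c d) 1 = pk a (b + 1) c d := h1
      simp only [Fin.mk_one, this, ih]
      simp [add_assoc, add_comm 1]
    · have : stp (pk a b c d) 2 = pk a b (c + 1) d := h2
      simp only [Fin.reduceFinMk, this, ih]
      simp [add_assoc, add_comm 1]
    · have : stp (pk a b c d) 3 = pk a b c (d + 1) := h3
      simp only [Fin.reduceFinMk, this, ih]
      simp [add_assoc, add_comm 1]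

theorem foldl_ker (u v : List A4) (hv : InKerPsi v) : (u ++ v).foldl stp 0 = u.foldl stp 0 := by
  have h := foldl_pk (u ++ v) 0 0 0 0
  have h' := foldl_pk u 0 0 0 0
  have h0 : pk 0 0 0 0 = 0 := rfl
  rw [h0] at h h'
  rw [h, h']
  simp only [List.count_append, pk]
  have := hv 0
  have := hv 1
  have := hv 2
  have := hv 3
  omega

theorem ker_four (v : List A4) (hv : InKerPsi v) : 4 ∣ v.length := by
  have key : v.length = v.count 0 + v.count 1 + v.count 2 + v.count 3 := by
    clear hv
    induction v with
    | nil => rfl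
    | cons x l ih =>
      fin_cases x <;> simp [ih] <;> omega
  have := hv 0
  have := hv 1
  have := hv 2
  have := hv 3
  omega

/-- The mask with bits `0, 16, 32, …`. -/
def msk : ℕ → ℕ
  | 0 => 0
  | n + 1 => 2 ^ 16 * msk n + 1

theorem msk_eq (n : ℕ) : (2 ^ (16 * n) - 1) / 65535 = msk n := by
  have h : 2 ^ (16 * n) = 65535 * msk n + 1 := by
    induction n with
    | zero => rfl
    | succ n ih => rw [show 16 * (n + 1) = 16 * n + 16 by ring, pow_add, ih, msk]; ring
  rw [h, Nat.add_sub_cancel]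
  exact Nat.mul_div_cancel_left _ (by norm_num)

theorem msk_bit (n i : ℕ) (h : i < n) : (msk n).testBit (16 * i) = true := by
  induction n generalizing i with
  | zero => omega
  | succ n ih =>
    rw [msk, Nat.testBit_two_pow_mul_add _ (by norm_num)]
    cases i with
    | zero => simp
    | succ i =>
      rw [if_neg (by omega), show 16 * (i + 1) - 16 = 16 * i by omega]
      exact ih i (by omega)

theorem tests_imp (A M n j : ℕ) (h : tests A M n = true) (h1 : 1 ≤ j) (hj : j ≤ n) :
    test A M (4 * j) = true := by
  induction n with
  | zero => omega
  | succ n ih =>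
    rw [tests, Bool.and_eq_true] at h
    rcases Nat.lt_or_ge n j with h2 | h2
    · obtain rfl : j = n + 1 := by omega
      exact h.1
    · exact ih h.2 h2

/-- Pairs of letters which may occur next to each other. -/
def Adj (x y : A4) : Prop :=
  ∃ p p' : Q4, p.toA = x ∧ p'.toA = y ∧ testPair p p' = true

theorem adj_fm (x : A4) : (fm x).IsChain Adj ∧ ∀ y ∈ (fm x).getLast?, Adj y 0 := by
  have aa : Adj 0 0 := ⟨.a, .a, rfl, rfl, tp_aa⟩
  have ab : Adj 0 1 := ⟨.a, .b, rfl, rfl, tp_ab⟩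
  have ad : Adj 0 3 := ⟨.a, .d, rfl, rfl, tp_ad⟩
  have ba : Adj 1 0 := ⟨.b, .a, rfl, rfl, tp_ba⟩
  have bc : Adj 1 2 := ⟨.b, .c, rfl, rfl, tp_bc⟩
  have ca : Adj 2 0 := ⟨.c, .a, rfl, rfl, tp_ca⟩
  have da : Adj 3 0 := ⟨.d, .a, rfl, rfl, tp_da⟩
  have db : Adj 3 1 := ⟨.d, .b, rfl, rfl, tp_db⟩
  fin_cases x <;> simp [fm, *]

theorem adj_fw (u : List A4) : (fw u).IsChain Adj := by
  induction u with
  | nil => exact List.isChain_nil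
  | cons x l ih =>
    have : fw (x :: l) = fm x ++ fw l := rfl
    rw [this, List.isChain_append]
    refine ⟨(adj_fm x).1, ih, fun y hy z hz => ?_⟩
    have hz0 : z = 0 := by
      cases l with
      | nil => simp [fw] at hz
      | cons x' l =>
        fin_cases x' <;> simp [fw, fm] at hz <;> exact hz.symm
    subst hz0
    exact (adj_fm x).2 y hy

theorem prefix_step (k : ℕ) : fw^[k] [0] <+: fw^[k + 1] [0] := by
  have : fw^[k + 1] [0] = fw^[k] [0] ++ fw^[k] [1, 0] := by
    rw [Function.iterate_succ_apply, ← fw_iter_append]; rfl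
  rw [this]
  exact List.prefix_append _ _

theorem prefix_le (k m : ℕ) (h : k ≤ m) : fw^[k] [0] <+: fw^[m] [0] := by
  induction m, h using Nat.le_induction with
  | base => exact List.prefix_rfl
  | succ m _ ih => exact ih.trans (prefix_step m)

theorem w_eq (K n : ℕ) (h : n < K) : (fw^[K] [0])[n]? = some (w n) := by
  have hlen : n < (fw^[n + 1] [0]).length := by
    rw [fw_iter_length]
    have : n + 1 < 3 ^ (n + 1) := Nat.lt_pow_self (by norm_num)
    simp; omega
  obtain ⟨t, ht⟩ := prefix_le (n + 1) K h
  rw [← ht, List.getElem?_append_left hlen, w, List.getD_eq_getElem?_getD,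
    List.getElem?_eq_getElem hlen]
  rfl

theorem w_block (n : ℕ) : ∃ x y : Q4, testPair x y = true ∧
    ∀ r < 4374, (fw^[7] [x.toA, y.toA])[r]? = some (w (2187 * n + r)) := by
  obtain ⟨K, hK⟩ : ∃ K, K = 2187 * n + 4374 := ⟨_, rfl⟩
  obtain ⟨u, hu⟩ : ∃ u, u = fw^[K + 1] [0] := ⟨_, rfl⟩
  have hlen : n + 1 < u.length := by
    rw [hu, fw_iter_length]
    have : K + 1 < 3 ^ (K + 1) := Nat.lt_pow_self (by norm_num)
    simp; omega
  have hch : u.IsChain Adj := by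
    rw [hu, Function.iterate_succ_apply']
    exact adj_fw _
  obtain ⟨x, y, hx, hy, hxy⟩ := (List.isChain_iff_getElem.1 hch) n (by omega)
  refine ⟨x, y, hxy, fun r hr => ?_⟩
  have hsplit : u = u.take n ++ ([x.toA, y.toA] ++ u.drop (n + 2)) := by
    conv_lhs => rw [← List.take_append_drop n u]
    rw [List.drop_eq_getElem_cons (by omega), List.drop_eq_getElem_cons hlen, hx, hy]
    rfl
  have h := w_eq (7 + (K + 1)) (2187 * n + r) (by omega)
  rw [Function.iterate_add_apply, ← hu, hsplit, fw_iter_append, fw_iter_append] at h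
  have h1 : (fw^[7] (u.take n)).length = 2187 * n := by
    rw [fw_iter_length, List.length_take, Nat.min_eq_left (by omega)]; norm_num
  have h2 : (fw^[7] [x.toA, y.toA]).length = 4374 := by
    rw [fw_iter_length]; norm_num
  rw [List.getElem?_append_right (by omega), h1, Nat.add_sub_cancel_left,
    List.getElem?_append_left (by omega)] at h
  exact h

/-- No kernel repetition inside a word which passes the test. -/
theorem no_rep (x y : Q4) (hxy : testPair x y = true) (l : List A4)
    (hl : l = fw^[7] [x.toA, y.toA]) (r q : ℕ) (hr : r < 2187) (hq1 : 1 ≤ q) (hq : q ≤ 1966)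
    (hker : InKerPsi ((l.drop r).take q))
    (hper : ∀ k < (q + 33) / 34, l[r + k]? = l[r + q + k]?) : False := by
  have hlen : l.length = 4374 := by rw [hl, fw_iter_length]; norm_num
  have h4 : 4 ∣ q := by
    have := ker_four _ hker
    rwa [List.length_take, List.length_drop, hlen, Nat.min_eq_left (by omega)] at this
  obtain ⟨j, rfl⟩ := h4
  simp only [testPair, enc_eq, force_eq] at hxy
  have hE : E 0 (fw^[7] [x.toA]) + 2 ^ (16 * 3 ^ 7) *
      E (List.foldl stp 0 (fw^[7] [x.toA])) (fw^[7] [y.toA]) = E 0 l := by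
    rw [hl, show [x.toA, y.toA] = [x.toA] ++ [y.toA] from rfl, fw_iter_append, E_append,
      fw_iter_length, List.length_singleton, mul_one]
  rw [hE, msk_eq] at hxy
  have ht := tests_imp _ _ _ j hxy (by omega) (by omega)
  generalize 4 * j = q at *
  rw [test, Nat.beq_eq] at ht
  -- equality of states
  have hst : ∀ k ≤ (q + 33) / 34,
      (l.take (r + k)).foldl stp 0 = (l.take (r + q + k)).foldl stp 0 := by
    intro k
    induction k with
    | zero =>
      intro _
      rw [add_zero, add_zero, List.take_add (i := r) (j := q)]
      exact (foldl_ker _ _ hker).symm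
    | succ k ih =>
      intro hk
      have h1 : r + k < l.length := by omega
      have h2 : r + q + k < l.length := by omega
      have h3 := hper k (by omega)
      rw [List.getElem?_eq_getElem h1, List.getElem?_eq_getElem h2, Option.some_inj] at h3
      rw [← add_assoc, ← add_assoc, List.take_succ_eq_append_getElem h1,
        List.take_succ_eq_append_getElem h2, List.foldl_append, List.foldl_append,
        ih (by omega), h3]
  have hz := spread_false 10 (E 0 l ^^^ (E 0 l >>> (16 * q))) (16 * ((q + 33) / 34 + 1)) (16 * r)
    (by omega) (by
      intro t ht
      have e1 : 16 * r + t = 16 * (r + t / 16) + t % 16 := by omega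
      have e2 : 16 * q + (16 * r + t) = 16 * (r + q + t / 16) + t % 16 := by omega
      rw [Nat.testBit_xor, Nat.testBit_shiftRight, e2, e1,
        E_bit _ _ _ _ (by norm_num) (by omega) (by omega),
        E_bit _ _ _ _ (by norm_num) (by omega) (by omega), hst _ (by omega), Bool.xor_self])
  have hb := congrArg (fun N => N.testBit (16 * r)) ht
  simp only [Nat.testBit_and] at hb
  rw [hz, msk_bit _ _ (by norm_num; omega)] at hb
  simp at hb

/-- Remark R2: for every `q ≤ 1966`, `w` contains no factor `v` having kernel period `q` such
that `34·|v| ≥ 35·q` (equivalently `|v|/q ≥ 35/34`). -/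
theorem stmt5 (q : ℕ) (hq : q ≤ 1966) :
    ¬ ∃ v : List A4, FactorOf v w ∧ KernelPeriod v q ∧ 34 * v.length ≥ 35 * q := by
  rintro ⟨v, ⟨i, hocc⟩, ⟨hqv, ⟨hq1, hper⟩, hker⟩, hlen⟩
  obtain ⟨x, y, hxy, hw⟩ := w_block (i / 2187)
  have hv : ∀ k < v.length, v[k]? = some (w (i + k)) := by
    intro k hk
    unfold OccursAt at hocc
    have h := congrArg (fun t : List A4 => t[k]?) hocc
    simp only [List.getElem?_map, List.getElem?_range hk] at h
    exact h
  have hlv : ∀ k < v.length, i % 2187 + k < 4374 →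
      (fw^[7] [x.toA, y.toA])[i % 2187 + k]? = v[k]? := by
    intro k hk hk'
    rw [hw _ hk', hv k hk, show 2187 * (i / 2187) + (i % 2187 + k) = i + k by omega]
  generalize hl : fw^[7] [x.toA, y.toA] = l at hlv
  refine no_rep x y hxy l hl.symm (i % 2187) q (Nat.mod_lt _ (by norm_num)) hq1 hq ?_ ?_
  · convert hker using 1
    apply List.ext_getElem?
    intro k
    rw [List.getElem?_take, List.getElem?_take]
    split_ifs with hk
    · rw [List.getElem?_drop]
      exact hlv k (by omega) (by omega)
    · rfl
  · intro k hk
    rw [hlv k (by omega) (by omega), add_assoc, hlv (q + k) (by omega) (by omega), add_comm q k]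
    exact hper k (by omega)
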